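/- The number D_{k,l} of derangements of {1,...,k+l} with exactly k values over the diagonal and l values under the diagonal equals N^{(0)}_{k,l} = Σ (k+l)!/((k_1+l_1)!···(k_r+l_r)!) · r!/(r_1!···r_p!), summed over unordered vector partitions (k,l)=(k_1,l_1)+...+(k_r,l_r) with all k_i,l_i ≥ 1 and multiplicities r_1,...,r_p of identical parts. -/

import Mathlib

/-- The fundamental `r`-part multinomial `N^{[r]}_{k,l}`: the number of unordered
partitions of `{1,…,k+l}` into `r` bicolored sets, each carrying a number of reds
`kᵢ ≥ 1` with `lᵢ = |Sᵢ| - kᵢ ≥ 1`, with `Σ kᵢ = k` (hence `Σ lᵢ = l`).  A partition is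
recorded as a finset of pairs `(Sᵢ, kᵢ)`. -/
noncomputable def Nfund (k l r : ℕ) : ℕ :=
  Nat.card {P : Finset (Finset (Fin (k + l)) × ℕ) //
    P.card = r ∧
    (∀ p ∈ P, 1 ≤ p.2 ∧ p.2 < p.1.card) ∧
    (P : Set (Finset (Fin (k + l)) × ℕ)).Pairwise (fun p q => Disjoint p.1 q.1) ∧
    P.sup Prod.fst = Finset.univ ∧
    ∑ p ∈ P, p.2 = k}

/-- The shifted multinomial `N^{(s)}_{k,l} = Σ_{r ≥ max(-s,1)} (r+s)! · N^{[r]}_{k,l}`,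
with `(r+s)!` interpreted as `0` when `r + s < 0`.  (All terms with `r > k + l`
vanish.) -/
noncomputable def Nshift (k l : ℕ) (s : ℤ) : ℕ :=
  ∑ r ∈ Finset.Icc 1 (k + l),
    (if 0 ≤ (r : ℤ) + s then ((r : ℤ) + s).toNat.factorial else 0) * Nfund k l r


/-! Give a permutation of `Fin n` the weight `∏ wᵢ`, with `wᵢ` equal to `x`, `y` or `z` according as
`σ i` is over, under or on the diagonal, and let `A n` be the total weight.  Inserting a new
smallest element as a fixed point multiplies by `z`, and inserting it into a cycle replaces one
factor by `x * y`; so `A (n + 1) = z * A n + x * y * ∂(A n)` for the derivation `∂` with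
`∂ x = ∂ y = ∂ z = 1`.  The coefficients of `1 - ∑ fₘ uᵐ / m!`, where `fₘ = ∑ xⁱ yᵐ⁻ⁱ`
(`0 < i < m`) is the total weight of the bicolorings of a block of size `m`, satisfy a similar
recurrence, and the Leibniz rule shows that the binomial convolution of the two sequences is
`n ↦ z ^ n`.  At `z = 0` this is the recurrence for ordered bicolored partitions obtained by
removing the first block. -/

section BinomialConvolution

open Finset

variable {R : Type*} [CommSemiring R]

/-- The binomial convolution `n ↦ ∑ C(n, i) aᵢ bₙ₋ᵢ`, i.e. the product of exponential generating
functions. -/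
def binomialConv (a b : ℕ → R) (n : ℕ) : R :=
  ∑ ij ∈ antidiagonal n, (n.choose ij.1 : R) * (a ij.1 * b ij.2)

theorem binomialConv_zero (a b : ℕ → R) : binomialConv a b 0 = a 0 * b 0 := by
  simp [binomialConv]

theorem binomialConv_succ (a b : ℕ → R) (n : ℕ) :
    binomialConv a b (n + 1) =
      binomialConv (fun i => a (i + 1)) b n + binomialConv a (fun j => b (j + 1)) n := by
  rw [binomialConv, sum_antidiagonal_choose_succ_mul (fun i j => a i * b j), add_comm]
  congr 1
  refine sum_congr rfl fun ij hij => ?_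
  rw [Nat.choose_symm_of_eq_add (mem_antidiagonal.1 hij).symm]

theorem binomialConv_mul_pred (a b : ℕ → R) (n : ℕ) :
    binomialConv (fun i => i * a (i - 1)) b n = n * binomialConv a b (n - 1) := by
  cases n with
  | zero => simp [binomialConv_zero]
  | succ n =>
    simp only [binomialConv, Nat.sum_antidiagonal_succ, mul_sum, Nat.cast_zero, zero_mul, mul_zero,
      zero_add, Nat.add_sub_cancel]
    refine sum_congr rfl fun ij _ => ?_
    have h : ((n + 1 : ℕ) * n.choose ij.1 : R) = (n + 1).choose (ij.1 + 1) * (ij.1 + 1 : ℕ) := by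
      exact_mod_cast congrArg (Nat.cast (R := R)) (Nat.add_one_mul_choose_eq n ij.1)
    rw [← mul_assoc (_ : R) (n.choose ij.1 : R), h]
    ring

theorem derivation_binomialConv {A : Type*} [CommSemiring A] [Algebra R A]
    (D : Derivation R A A) (a b : ℕ → A) (n : ℕ) :
    D (binomialConv a b n) =
      binomialConv (fun i => D (a i)) b n + binomialConv a (fun j => D (b j)) n := by
  simp only [binomialConv, map_sum, ← sum_add_distrib, Derivation.leibniz, Derivation.map_natCast,
    smul_eq_mul]
  exact sum_congr rfl fun _ _ => by ring

theorem binomialConv_eq_pow_of_recurrence {A : Type*} [CommRing A] [Algebra R A]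
    (D : Derivation R A A) {c z : A} (hz : D z = 1) {a g : ℕ → A} (ha₀ : a 0 = 1) (hg₀ : g 0 = 1)
    (ha : ∀ n, a (n + 1) = z * a n + c * D (a n))
    (hg : ∀ n, g (n + 1) = c * (D (g n) - n * g (n - 1))) (n : ℕ) :
    binomialConv g a n = z ^ n := by
  have hrec (n : ℕ) : binomialConv g a (n + 1) =
      z * binomialConv g a n + c * (D (binomialConv g a n) - n * binomialConv g a (n - 1)) := by
    rw [binomialConv_succ, derivation_binomialConv, ← binomialConv_mul_pred]
    simp only [binomialConv, ha, hg, mul_sum, ← sum_add_distrib, ← sum_sub_distrib]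
    exact sum_congr rfl fun _ _ => by ring
  induction n using Nat.strong_induction_on with
  | _ n ih =>
    cases n with
    | zero => simp [binomialConv_zero, ha₀, hg₀]
    | succ n =>
      rw [hrec, ih n (by lia), ih (n - 1) (by lia), Derivation.leibniz_pow, hz]
      simp only [nsmul_eq_mul, smul_eq_mul]
      ring

end BinomialConvolution

section BlockSum

open Finset

variable {R : Type*}

/-- The total weight of a bicolored block with `m` elements: a block with `i` reds, `0 < i < m`,
has weight `x ^ i * y ^ (m - i)`. -/
def blockSum [CommSemiring R] (x y : R) (m : ℕ) : R :=
  ∑ i ∈ Ico 1 m, x ^ i * y ^ (m - i)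

variable [CommRing R]

/-- The coefficient of `u ^ m / m!` in `1 - ∑ blockSum x y m * u ^ m / m!`. -/
def oneSubBlockSum (x y : R) (m : ℕ) : R :=
  (if m = 0 then 1 else 0) - blockSum x y m

theorem oneSubBlockSum_zero (x y : R) : oneSubBlockSum x y 0 = 1 := by
  simp [oneSubBlockSum, blockSum]

theorem map_oneSubBlockSum {S : Type*} [CommRing S] (φ : R →+* S) (x y : R) (m : ℕ) :
    φ (oneSubBlockSum x y m) = oneSubBlockSum (φ x) (φ y) m := by
  simp [oneSubBlockSum, blockSum, apply_ite φ]

theorem oneSubBlockSum_succ (x y : R) (n : ℕ) :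
    oneSubBlockSum x y (n + 1) = y * oneSubBlockSum x y n - x ^ n * y := by
  obtain _ | n := n
  · simp [oneSubBlockSum, blockSum]
  · have hpow : ∑ i ∈ Ico 1 (n + 1), x ^ i * y ^ (n + 1 + 1 - i) =
        y * ∑ i ∈ Ico 1 (n + 1), x ^ i * y ^ (n + 1 - i) := by
      rw [mul_sum]
      refine sum_congr rfl fun i hi => ?_
      rw [Nat.succ_sub (mem_Ico.1 hi).2.le, pow_succ]
      ring
    simp only [oneSubBlockSum, blockSum, sum_Ico_succ_top (Nat.le_add_left 1 n), hpow,
      Nat.add_one_ne_zero, if_false, Nat.add_sub_cancel_left]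
    ring

theorem oneSubBlockSum_succ_eq_derivation {K : Type*} [CommSemiring K] [Algebra K R]
    (D : Derivation K R R) {x y : R} (hx : D x = 1) (hy : D y = 1) (n : ℕ) :
    oneSubBlockSum x y (n + 1) =
      x * y * (D (oneSubBlockSum x y n) - n * oneSubBlockSum x y (n - 1)) := by
  induction n with
  | zero => simp [oneSubBlockSum_succ, oneSubBlockSum_zero]
  | succ n ih =>
    have hprev : (n : R) * oneSubBlockSum x y n =
        n * (y * oneSubBlockSum x y (n - 1) - x ^ (n - 1) * y) := by
      obtain _ | n := n
      · simp
      · rw [oneSubBlockSum_succ x y n, Nat.add_sub_cancel]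
    have hD : D (oneSubBlockSum x y (n + 1)) = y * D (oneSubBlockSum x y n) +
        oneSubBlockSum x y n - (x ^ n + n * x ^ (n - 1) * y) := by
      simp only [oneSubBlockSum_succ x y n, map_sub, Derivation.leibniz, Derivation.leibniz_pow,
        hx, hy, smul_eq_mul, nsmul_eq_mul]
      ring
    rw [oneSubBlockSum_succ x y (n + 1), hD, Nat.add_sub_cancel]
    push_cast
    linear_combination y * ih + x * y * hprev

end BlockSum

section TrivariateEulerian

open Finset Polynomial

theorem derivation_prod {R A M ι : Type*} [CommSemiring R] [CommSemiring A] [AddCommMonoid M]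
    [Algebra R A] [Module A M] [Module R M] [DecidableEq ι] (D : Derivation R A M)
    (s : Finset ι) (f : ι → A) :
    D (∏ i ∈ s, f i) = ∑ i ∈ s, (∏ j ∈ s.erase i, f j) • D (f i) := by
  induction s using Finset.induction_on with
  | empty => simp
  | insert a s ha ih =>
    have herase : ∀ i ∈ s, ∏ j ∈ (insert a s).erase i, f j = f a * ∏ j ∈ s.erase i, f j := by
      intro i hi
      rw [erase_insert_of_ne (ne_of_mem_of_not_mem hi ha).symm,
        prod_insert (mt mem_of_mem_erase ha)]
    rw [prod_insert ha, Derivation.leibniz, ih, sum_insert ha, erase_insert ha, smul_sum, add_comm]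
    congr 1
    exact sum_congr rfl fun i hi => by rw [herase i hi, mul_smul]

/-- The weight of the entry `σ i = j` of a permutation: `x` if it is over the diagonal, `y` if it is
under the diagonal and `z` if it is a fixed point. -/
def entryWeight {α R : Type*} [LinearOrder α] (x y z : R) (i j : α) : R :=
  if i < j then x else if j < i then y else z

theorem entryWeight_succ {R : Type*} (x y z : R) {n : ℕ} (i j : Fin n) :
    entryWeight x y z i.succ j.succ = entryWeight x y z i j := by
  simp [entryWeight]

theorem map_entryWeight {α R S : Type*} [LinearOrder α] (φ : R → S) (x y z : R) (i j : α) :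
    φ (entryWeight x y z i j) = entryWeight (φ x) (φ y) (φ z) i j := by
  simp only [entryWeight, apply_ite φ]

variable {R : Type*} [CommSemiring R]

/-- The trivariate Eulerian polynomial of degree `n`, evaluated at `x`, `y`, `z`: the sum over the
permutations of `Fin n` of `x ^ a * y ^ b * z ^ c`, where `a`, `b` and `c` count the values over,
under and on the diagonal. -/
def trivariateEulerian (x y z : R) (n : ℕ) : R :=
  ∑ σ : Equiv.Perm (Fin n), ∏ i, entryWeight x y z i (σ i)

theorem trivariateEulerian_zero (x y z : R) : trivariateEulerian x y z 0 = 1 := by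
  simp [trivariateEulerian]

theorem map_trivariateEulerian {S : Type*} [CommSemiring S] (φ : R →+* S) (x y z : R) (n : ℕ) :
    φ (trivariateEulerian x y z n) = trivariateEulerian (φ x) (φ y) (φ z) n := by
  simp only [trivariateEulerian, map_sum, map_prod, map_entryWeight φ]

theorem prod_entryWeight_decomposeFin_zero (x y z : R) {n : ℕ} (σ : Equiv.Perm (Fin n)) :
    ∏ i, entryWeight x y z i (Equiv.Perm.decomposeFin.symm (0, σ) i) =
      z * ∏ i, entryWeight x y z i (σ i) := by
  simp [Fin.prod_univ_succ, entryWeight]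

theorem prod_entryWeight_decomposeFin_succ (x y z : R) {n : ℕ}
    (σ : Equiv.Perm (Fin n)) (i : Fin n) :
    ∏ j, entryWeight x y z j (Equiv.Perm.decomposeFin.symm ((σ i).succ, σ) j) =
      x * y * ∏ j ∈ univ.erase i, entryWeight x y z j (σ j) := by
  have hne : ∀ j ∈ univ.erase i,
      Equiv.Perm.decomposeFin.symm ((σ i).succ, σ) j.succ = (σ j).succ := by
    intro j hj
    rw [Equiv.Perm.decomposeFin_symm_apply_succ]
    exact Equiv.swap_apply_of_ne_of_ne (Fin.succ_ne_zero _) (by simpa using hj)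
  have hzero : entryWeight x y z 0 (Equiv.Perm.decomposeFin.symm ((σ i).succ, σ) 0) = x := by
    simp [entryWeight]
  have hsucc : entryWeight x y z i.succ (Equiv.Perm.decomposeFin.symm ((σ i).succ, σ) i.succ) =
      y := by
    simp [entryWeight]
  have hrest := prod_congr rfl fun j hj =>
    (congrArg (entryWeight x y z j.succ) (hne j hj)).trans (entryWeight_succ x y z j (σ j))
  rw [Fin.prod_univ_succ, ← mul_prod_erase univ _ (mem_univ i), hzero, hsucc, hrest, mul_assoc]

theorem trivariateEulerian_succ {K : Type*} [CommSemiring K] [Algebra K R]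
    (D : Derivation K R R) {x y z : R} (hx : D x = 1) (hy : D y = 1) (hz : D z = 1) (n : ℕ) :
    trivariateEulerian x y z (n + 1) =
      z * trivariateEulerian x y z n + x * y * D (trivariateEulerian x y z n) := by
  have hD (i j : Fin n) : D (entryWeight x y z i j) = 1 := by
    rw [map_entryWeight D, hx, hy, hz]
    simp [entryWeight]
  have hreindex (σ : Equiv.Perm (Fin n)) :
      ∑ j : Fin n, ∏ i, entryWeight x y z i (Equiv.Perm.decomposeFin.symm (j.succ, σ) i) =
        x * y * D (∏ i, entryWeight x y z i (σ i)) := by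
    rw [← Equiv.sum_comp σ]
    simp only [prod_entryWeight_decomposeFin_succ, derivation_prod, hD, smul_eq_mul, mul_one,
      mul_sum]
  rw [trivariateEulerian, ← Equiv.sum_comp Equiv.Perm.decomposeFin.symm, Fintype.sum_prod_type,
    Fin.sum_univ_succ, sum_comm]
  simp only [prod_entryWeight_decomposeFin_zero, hreindex, trivariateEulerian, map_sum, mul_sum]

theorem binomialConv_oneSubBlockSum_trivariateEulerian {R : Type*} [CommRing R] (x y z : R)
    (n : ℕ) :
    binomialConv (oneSubBlockSum x y) (trivariateEulerian x y z) n = z ^ n := by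
  -- The derivation exists after the translation `x ↦ x + X`, `y ↦ y + X`, `z ↦ z + X`.
  have h := binomialConv_eq_pow_of_recurrence (derivative' (R := R)) (z := C z + X)
    (by simp) (trivariateEulerian_zero (C x + X) (C y + X) (C z + X))
    (oneSubBlockSum_zero (C x + X) (C y + X))
    (trivariateEulerian_succ _ (by simp) (by simp) (by simp))
    (oneSubBlockSum_succ_eq_derivation _ (by simp) (by simp)) n
  apply_fun evalRingHom 0 at h
  simp only [binomialConv, map_sum, map_mul, map_natCast, map_oneSubBlockSum,
    map_trivariateEulerian, map_pow] at h
  simpa [binomialConv] using h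

theorem trivariateEulerian_eq_binomialConv {R : Type*} [CommRing R] (x y : R) {n : ℕ}
    (hn : n ≠ 0) :
    trivariateEulerian x y 0 n = binomialConv (blockSum x y) (trivariateEulerian x y 0) n := by
  obtain ⟨n, rfl⟩ := Nat.exists_eq_succ_of_ne_zero hn
  have h := binomialConv_oneSubBlockSum_trivariateEulerian x y 0 (n + 1)
  simp only [binomialConv, oneSubBlockSum, sub_mul, mul_sub, sum_sub_distrib] at h
  simpa [binomialConv, Nat.sum_antidiagonal_succ, sub_eq_zero] using h

end TrivariateEulerian

section BicoloredPartition

open Finset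

variable {α : Type*} [DecidableEq α] {U : Finset α} {P : Finset (Finset α × ℕ)}

/-- `P` is a partition of `U` into bicolored blocks: each block is a pair `(S, i)` of a set `S` and
its number `i` of reds, with at least one red and at least one non-red element. -/
structure IsBicoloredPartition (U : Finset α) (P : Finset (Finset α × ℕ)) : Prop where
  reds_mem_Ico : ∀ p ∈ P, p.2 ∈ Ico 1 p.1.card
  pairwiseDisjoint : (P : Set (Finset α × ℕ)).PairwiseDisjoint Prod.fst
  sup_eq : P.sup Prod.fst = U

namespace IsBicoloredPartition

theorem subset (h : IsBicoloredPartition U P) {p : Finset α × ℕ} (hp : p ∈ P) : p.1 ⊆ U :=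
  h.sup_eq ▸ le_sup (f := Prod.fst) hp

theorem nonempty (h : IsBicoloredPartition U P) {p : Finset α × ℕ} (hp : p ∈ P) :
    p.1.Nonempty := by
  have := mem_Ico.1 (h.reds_mem_Ico p hp)
  exact card_pos.1 (by lia)

theorem empty_iff : IsBicoloredPartition ∅ P ↔ P = ∅ := by
  refine ⟨fun h => eq_empty_of_forall_notMem fun p hp => ?_, ?_⟩
  · exact (h.nonempty hp).ne_empty (subset_empty.1 (h.subset hp))
  · rintro rfl
    exact ⟨by simp, by simp, by simp⟩

theorem ne_empty (h : IsBicoloredPartition U P) (hU : U.Nonempty) : P ≠ ∅ := by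
  rintro rfl
  exact hU.ne_empty h.sup_eq.symm

theorem notMem_of_sdiff {S : Finset α} {i : ℕ} (h : IsBicoloredPartition (U \ S) P) :
    (S, i) ∉ P := by
  intro hp
  exact (h.nonempty hp).ne_empty (disjoint_self.1 (subset_sdiff.1 (h.subset hp)).2)

theorem erase (h : IsBicoloredPartition U P) {p : Finset α × ℕ} (hp : p ∈ P) :
    IsBicoloredPartition (U \ p.1) (P.erase p) where
  reds_mem_Ico q hq := h.reds_mem_Ico q (mem_of_mem_erase hq)
  pairwiseDisjoint := h.pairwiseDisjoint.subset (by simp)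
  sup_eq := by
    have hdisj : Disjoint p.1 ((P.erase p).sup Prod.fst) :=
      Finset.disjoint_sup_right.2 fun q hq =>
        h.pairwiseDisjoint hp (mem_of_mem_erase hq) (ne_of_mem_erase hq).symm
    rw [← h.sup_eq, ← insert_erase hp, sup_insert, erase_insert (notMem_erase p P), sup_eq_union,
      union_sdiff_cancel_left hdisj]

theorem insert {S : Finset α} {i : ℕ} (h : IsBicoloredPartition (U \ S) P) (hS : S ⊆ U)
    (hi : i ∈ Ico 1 S.card) : IsBicoloredPartition U (insert (S, i) P) where
  reds_mem_Ico := forall_mem_insert _ _ _ |>.2 ⟨hi, h.reds_mem_Ico⟩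
  pairwiseDisjoint := by
    rw [coe_insert]
    exact h.pairwiseDisjoint.insert fun q hq _ => (subset_sdiff.1 (h.subset hq)).2.symm
  sup_eq := by rw [sup_insert, h.sup_eq, sup_eq_union, union_sdiff_of_subset hS]

theorem card_le (h : IsBicoloredPartition U P) : P.card ≤ U.card := by
  rw [← h.sup_eq, sup_eq_biUnion]
  exact card_le_card_biUnion h.pairwiseDisjoint fun p hp => h.nonempty hp

end IsBicoloredPartition

open Classical in
/-- The finset of all bicolored partitions of `U`. -/
noncomputable def bicoloredPartitions (U : Finset α) : Finset (Finset (Finset α × ℕ)) :=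
  {P ∈ (U.powerset ×ˢ range U.card).powerset | IsBicoloredPartition U P}

theorem mem_bicoloredPartitions : P ∈ bicoloredPartitions U ↔ IsBicoloredPartition U P := by
  classical
  rw [bicoloredPartitions, mem_filter, and_iff_right_iff_imp, mem_powerset]
  intro h p hp
  rw [mem_product, mem_powerset, mem_range]
  exact ⟨h.subset hp, (mem_Ico.1 (h.reds_mem_Ico p hp)).2.trans_le (card_le_card (h.subset hp))⟩

variable {R : Type*} [CommSemiring R]

/-- The weighted number of ordered bicolored partitions of `U`, each block `p` having
weight `w p`: the factorial counts the orderings of the blocks. -/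
noncomputable def orderedPartitionSum (w : Finset α × ℕ → R) (U : Finset α) : R :=
  ∑ P ∈ bicoloredPartitions U, (P.card.factorial : R) * ∏ p ∈ P, w p

theorem orderedPartitionSum_empty (w : Finset α × ℕ → R) : orderedPartitionSum w ∅ = 1 := by
  have hempty : bicoloredPartitions (∅ : Finset α) = {∅} := by
    ext P
    rw [mem_bicoloredPartitions, IsBicoloredPartition.empty_iff, mem_singleton]
  simp [orderedPartitionSum, hempty]

theorem sum_bicoloredPartitions_sum_mem {M : Type*} [AddCommMonoid M] (U : Finset α)
    (f : Finset α × ℕ → Finset (Finset α × ℕ) → M) :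
    ∑ P ∈ bicoloredPartitions U, ∑ p ∈ P, f p (P.erase p) =
      ∑ S ∈ U.powerset, ∑ i ∈ Ico 1 S.card, ∑ P ∈ bicoloredPartitions (U \ S), f (S, i) P := by
  simp only [sum_sigma']
  refine sum_bij' (fun x _ => ⟨x.2.1, x.2.2, x.1.erase x.2⟩)
    (fun y _ => ⟨insert (y.1, y.2.1) y.2.2, (y.1, y.2.1)⟩) ?_ ?_ ?_ ?_ ?_
  · rintro ⟨P, p⟩ h
    simp only [mem_sigma, mem_bicoloredPartitions, mem_powerset] at h ⊢
    exact ⟨h.1.subset h.2, h.1.reds_mem_Ico p h.2, h.1.erase h.2⟩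
  · rintro ⟨S, i, P⟩ h
    simp only [mem_sigma, mem_bicoloredPartitions, mem_powerset] at h ⊢
    exact ⟨h.2.2.insert h.1 h.2.1, mem_insert_self _ _⟩
  · rintro ⟨P, p⟩ h
    simp only [mem_sigma] at h
    simp [insert_erase h.2]
  · rintro ⟨S, i, P⟩ h
    simp only [mem_sigma, mem_bicoloredPartitions] at h
    simp [erase_insert h.2.2.notMem_of_sdiff]
  · simp

theorem orderedPartitionSum_eq_sum_powerset (w : Finset α × ℕ → R) (hU : U.Nonempty) :
    orderedPartitionSum w U =
      ∑ S ∈ U.powerset, (∑ i ∈ Ico 1 S.card, w (S, i)) * orderedPartitionSum w (U \ S) := by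
  have hfirst : ∀ P ∈ bicoloredPartitions U, (P.card.factorial : R) * ∏ p ∈ P, w p =
      ∑ p ∈ P, w p * (((P.erase p).card.factorial : R) * ∏ q ∈ P.erase p, w q) := by
    intro P hP
    have hP : P.card ≠ 0 := card_ne_zero.2 <| nonempty_iff_ne_empty.2 <|
      (mem_bicoloredPartitions.1 hP).ne_empty hU
    have hp : ∀ p ∈ P, w p * (((P.erase p).card.factorial : R) * ∏ q ∈ P.erase p, w q) =
        (P.card - 1).factorial * ∏ q ∈ P, w q := by
      intro p hp
      rw [mul_left_comm, mul_prod_erase P w hp, card_erase_of_mem hp]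
    rw [sum_congr rfl hp, sum_const, nsmul_eq_mul, ← mul_assoc, ← Nat.cast_mul,
      Nat.mul_factorial_pred hP]
  rw [orderedPartitionSum, sum_congr rfl hfirst, sum_bicoloredPartitions_sum_mem U
    fun p P => w p * ((P.card.factorial : R) * ∏ q ∈ P, w q)]
  simp only [orderedPartitionSum, sum_mul_sum]

theorem sum_powerset_card_eq_binomialConv (a b : ℕ → R) (U : Finset α) :
    ∑ S ∈ U.powerset, a S.card * b (U \ S).card = binomialConv a b U.card := by
  have h := sum_powerset_apply_card (fun m => a m * b (U.card - m)) (x := U)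
  rw [binomialConv, Nat.sum_antidiagonal_eq_sum_range_succ_mk]
  simp only [nsmul_eq_mul] at h
  rw [← h]
  exact sum_congr rfl fun S hS => by rw [card_sdiff_of_subset (mem_powerset.1 hS)]

theorem orderedPartitionSum_eq_trivariateEulerian {R : Type*} [CommRing R] (x y : R)
    (U : Finset α) :
    orderedPartitionSum (fun p => x ^ p.2 * y ^ (p.1.card - p.2)) U =
      trivariateEulerian x y 0 U.card := by
  induction U using Finset.strongInduction with
  | _ U ih =>
    obtain rfl | hU := U.eq_empty_or_nonempty
    · rw [orderedPartitionSum_empty, card_empty, trivariateEulerian_zero]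
    · rw [orderedPartitionSum_eq_sum_powerset _ hU,
        trivariateEulerian_eq_binomialConv x y hU.card_ne_zero,
        ← sum_powerset_card_eq_binomialConv]
      refine sum_congr rfl fun S hS => ?_
      obtain rfl | hS' := S.eq_empty_or_nonempty
      · simp [blockSum]
      · rw [ih (U \ S) (sdiff_ssubset (mem_powerset.1 hS) hS'), blockSum]

end BicoloredPartition

section Coefficients

open Finset Polynomial

theorem prod_entryWeight_one_zero {R α : Type*} [CommSemiring R] [LinearOrder α] [Fintype α]
    (x : R) (f : α → α) :
    ∏ i, entryWeight x 1 0 i (f i) = if ∀ i, f i ≠ i then x ^ #{i | i < f i} else 0 := by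
  split_ifs with hf
  · rw [← prod_const, prod_filter]
    refine prod_congr rfl fun i _ => ?_
    obtain h | h := (hf i).lt_or_gt
    · simp [entryWeight, h, h.not_gt]
    · simp [entryWeight, h]
  · push Not at hf
    obtain ⟨i, hi⟩ := hf
    exact prod_eq_zero (mem_univ i) (by simp [entryWeight, hi])

theorem coeff_trivariateEulerian_X_one_zero {R : Type*} [CommSemiring R] (n k : ℕ) :
    (trivariateEulerian (X : R[X]) 1 0 n).coeff k =
      Nat.card {σ : Equiv.Perm (Fin n) // (∀ i, σ i ≠ i) ∧ #{i | i < σ i} = k} := by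
  rw [Nat.card_eq_fintype_card, Fintype.card_subtype, natCast_card_filter, trivariateEulerian,
    finsetSum_coeff]
  refine sum_congr rfl fun σ _ => ?_
  rw [prod_entryWeight_one_zero, ite_and, apply_ite (coeff · k), coeff_X_pow, coeff_zero]
  simp only [eq_comm (a := k)]

theorem coeff_orderedPartitionSum_X {R α : Type*} [CommSemiring R] [DecidableEq α] (U : Finset α)
    (k : ℕ) :
    (orderedPartitionSum (fun p => (X : R[X]) ^ p.2) U).coeff k =
      ∑ P ∈ bicoloredPartitions U with ∑ p ∈ P, p.2 = k, (P.card.factorial : R) := by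
  simp only [orderedPartitionSum, finsetSum_coeff, prod_pow_eq_pow_sum, sum_filter]
  refine sum_congr rfl fun P _ => ?_
  rw [← C_eq_natCast, coeff_C_mul, coeff_X_pow]
  simp [eq_comm]

theorem card_filter_lt_add_card_filter_gt {α : Type*} [LinearOrder α] [Fintype α] {f : α → α}
    (hf : ∀ i, f i ≠ i) :
    #{i | i < f i} + #{i | f i < i} = Fintype.card α := by
  have hgt (i : α) : f i < i ↔ ¬ i < f i := by
    rw [not_lt, (hf i).le_iff_lt]
  simp only [hgt, card_filter_add_card_filter_not, card_univ]

theorem Nfund_eq_card_filter (k l r : ℕ) :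
    Nfund k l r =
      #{P ∈ bicoloredPartitions (univ : Finset (Fin (k + l))) |
        ∑ p ∈ P, p.2 = k ∧ P.card = r} := by
  rw [Nfund, ← Nat.card_eq_finsetCard]
  refine Nat.card_congr (Equiv.subtypeEquivRight fun P => ?_)
  rw [mem_filter, mem_bicoloredPartitions]
  constructor
  · rintro ⟨hr, hreds, hdisj, hsup, hk⟩
    exact ⟨⟨fun p hp => mem_Ico.2 (hreds p hp), hdisj, hsup⟩, hk, hr⟩
  · rintro ⟨h, hk, hr⟩
    exact ⟨hr, fun p hp => mem_Ico.1 (h.reds_mem_Ico p hp), h.pairwiseDisjoint, h.sup_eq, hk⟩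

theorem Nshift_zero_eq_sum_bicoloredPartitions {k l : ℕ} (hkl : k + l ≠ 0) :
    Nshift k l 0 =
      ∑ P ∈ bicoloredPartitions (univ : Finset (Fin (k + l))) with ∑ p ∈ P, p.2 = k,
        P.card.factorial := by
  have hcard : ∀ P ∈ {P ∈ bicoloredPartitions (univ : Finset (Fin (k + l))) | ∑ p ∈ P, p.2 = k},
      P.card ∈ Icc 1 (k + l) := by
    intro P hP
    have hP := mem_bicoloredPartitions.1 (mem_filter.1 hP).1
    have : NeZero (k + l) := ⟨hkl⟩
    exact mem_Icc.2 ⟨card_pos.2 (nonempty_iff_ne_empty.2 (hP.ne_empty univ_nonempty)),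
      hP.card_le.trans_eq (by simp)⟩
  rw [Nshift, ← sum_fiberwise_of_maps_to hcard]
  refine sum_congr rfl fun r _ => ?_
  rw [sum_congr rfl fun P hP => congrArg Nat.factorial (mem_filter.1 hP).2, sum_const,
    filter_filter, ← Nfund_eq_card_filter]
  simp [mul_comm]

end Coefficients

/-- The number of derangements of `{1,…,k+l}` with exactly `k` values over the diagonal
and `l` values under the diagonal equals the shifted multinomial `N^{(0)}_{k,l}`. -/
theorem derangements_eq_shifted_multinomial (k l : ℕ) (hk : 1 ≤ k) (hl : 1 ≤ l) :
    Nat.card {σ : Equiv.Perm (Fin (k + l)) //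
        (Finset.univ.filter fun i => i < σ i).card = k ∧
        (Finset.univ.filter fun i => σ i < i).card = l ∧
        ∀ i, σ i ≠ i} = Nshift k l 0 := by
  have hstat (σ : Equiv.Perm (Fin (k + l))) :
      ((Finset.univ.filter fun i => i < σ i).card = k ∧
        (Finset.univ.filter fun i => σ i < i).card = l ∧ ∀ i, σ i ≠ i) ↔
      (∀ i, σ i ≠ i) ∧ (Finset.univ.filter fun i => i < σ i).card = k := by
    refine ⟨fun h => ⟨h.2.2, h.1⟩, fun h => ⟨h.2, ?_, h.1⟩⟩
    have hadd := card_filter_lt_add_card_filter_gt h.1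
    rw [Fintype.card_fin] at hadd
    lia
  have hgen := orderedPartitionSum_eq_trivariateEulerian (Polynomial.X : Polynomial ℤ) 1
    (Finset.univ : Finset (Fin (k + l)))
  have hcoeff := congrArg (Polynomial.coeff · k) hgen
  simp only [one_pow, mul_one, coeff_orderedPartitionSum_X, Finset.card_fin,
    coeff_trivariateEulerian_X_one_zero] at hcoeff
  rw [Nat.card_congr (Equiv.subtypeEquivRight hstat),
    Nshift_zero_eq_sum_bicoloredPartitions (by lia)]
  exact_mod_cast hcoeff.symm
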